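/- The zeros of ℘'(z) + √3 are exactly the points ϖ/3 + ω, e^{πi/3}·(2ϖ/3) + ω, e^{2πi/3}·(ϖ/3) + ω with ω ∈ 𝕋, and they are all simple. -/

import Mathlib

open Complex

noncomputable section

/-- `e^{πi/3}`. -/
def τ : ℂ := Complex.exp (Real.pi * Complex.I / 3)

/-- The point `mϖ + n e^{πi/3} ϖ` of the hexagonal lattice with real period `ϖ`. -/
def hexPt (ϖ : ℝ) (p : ℤ × ℤ) : ℂ := p.1 * ϖ + p.2 * τ * ϖ

/-- The hexagonal lattice `𝕋 = ℤϖ + ℤ e^{πi/3} ϖ`. -/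
def hexLattice (ϖ : ℝ) : Set ℂ := Set.range (hexPt ϖ)

/-- The real fundamental period `ϖ = Γ(1/3)³/(2π)`. -/
def ϖ₀ : ℝ := (Real.Gamma (1/3))^3 / (2 * Real.pi)

/-- The Weierstrass `℘`-function of the hexagonal lattice `𝕋 = ℤϖ₀ + ℤ e^{πi/3} ϖ₀`,
i.e. the `℘`-function with invariants `g₂ = 0`, `g₃ = 1`. -/
def wp (z : ℂ) : ℂ :=
  1 / z ^ 2 + ∑' p : {p : ℤ × ℤ // p ≠ 0}, (1 / (z - hexPt ϖ₀ p) ^ 2 - 1 / (hexPt ϖ₀ p) ^ 2)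

/-- The Weierstrass `σ`-function of the hexagonal lattice with real period `ϖ`. -/
def wSigma (ϖ : ℝ) (z : ℂ) : ℂ :=
  z * ∏' p : {p : ℤ × ℤ // p ≠ 0},
    ((1 - z / hexPt ϖ p) * Complex.exp (z / hexPt ϖ p + z ^ 2 / (2 * (hexPt ϖ p) ^ 2)))

/-- The Weierstrass `ζ`-function of the hexagonal lattice with real period `ϖ`. -/
def wZeta (ϖ : ℝ) (z : ℂ) : ℂ :=
  1 / z + ∑' p : {p : ℤ × ℤ // p ≠ 0},
    (1 / (z - hexPt ϖ p) + 1 / hexPt ϖ p + z / (hexPt ϖ p) ^ 2)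


open Filter Topology

lemma varpi_pos : 0 < ϖ₀ := by
  unfold ϖ₀
  have := Real.Gamma_pos_of_pos (show (0:ℝ) < 1/3 by norm_num)
  positivity

lemma varpi_ne : (ϖ₀ : ℂ) ≠ 0 := by exact_mod_cast varpi_pos.ne'

lemma tau_eq : τ = 1 / 2 + (Real.sqrt 3 / 2 : ℝ) * I := by
  unfold τ
  have : (Real.pi * Complex.I / 3 : ℂ) = ((Real.pi / 3 : ℝ) : ℂ) * I := by push_cast; ring
  rw [this, Complex.exp_mul_I, ← Complex.ofReal_cos, ← Complex.ofReal_sin,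
    Real.cos_pi_div_three, Real.sin_pi_div_three]
  push_cast; ring

lemma tau_re : τ.re = 1 / 2 := by rw [tau_eq]; simp
lemma tau_im : τ.im = Real.sqrt 3 / 2 := by rw [tau_eq]; simp
lemma tau_im_pos : 0 < τ.im := by rw [tau_im]; positivity

lemma tau_sq : τ ^ 2 = τ - 1 := by
  have h3 : ((Real.sqrt 3 : ℝ) : ℂ) ^ 2 = 3 := by
    rw [← Complex.ofReal_pow, Real.sq_sqrt (by norm_num)]; simp
  rw [tau_eq]; push_cast
  have := Complex.I_sq
  linear_combination (1/4 : ℂ) * I ^ 2 * h3 + (3/4 : ℂ) * this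

lemma tau_cube : τ ^ 3 = -1 := by
  linear_combination (τ + 1) * tau_sq

lemma tau_ne : τ ≠ 0 := by
  intro h; have := tau_cube; rw [h] at this; norm_num at this

lemma conj_tau : (starRingEnd ℂ) τ = 1 - τ := by
  apply Complex.ext <;> simp [tau_re, tau_im]; norm_num

/-- The hexagonal period pair. -/
def LL : PeriodPair where
  ω₁ := ϖ₀
  ω₂ := τ * ϖ₀
  indep := by
    rw [LinearIndependent.pair_iff]
    intro s t h
    have him := congrArg Complex.im h
    have hre := congrArg Complex.re h
    simp at him hre
    have hp := varpi_pos.ne'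
    have ht := tau_im_pos.ne'
    have h0 : t = 0 := by
      rcases him with h | h
      · exact h
      · exact absurd h (by simp [hp, ht])
    subst h0
    simpa [hp] using hre

lemma LL1 : LL.ω₁ = ϖ₀ := rfl
lemma LL2 : LL.ω₂ = τ * ϖ₀ := rfl

lemma mem_LL {x : ℂ} : x ∈ LL.lattice ↔ ∃ m n : ℤ, (m + n * τ) * ϖ₀ = x := by
  rw [PeriodPair.mem_lattice, LL1, LL2]
  constructor <;> rintro ⟨m, n, h⟩ <;> refine ⟨m, n, ?_⟩ <;> rw [← h] <;> ring

lemma mem_hex {x : ℂ} : x ∈ hexLattice ϖ₀ ↔ x ∈ LL.lattice := by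
  rw [mem_LL]
  constructor
  · rintro ⟨⟨m, n⟩, h⟩
    refine ⟨m, n, ?_⟩
    rw [← h, hexPt]; ring
  · rintro ⟨m, n, h⟩
    refine ⟨⟨m, n⟩, ?_⟩
    rw [← h, hexPt]; ring

lemma coef_eq {a b a' b' : ℝ} (h : ((a : ℂ) + b * τ) * ϖ₀ = (a' + b' * τ) * ϖ₀) :
    a = a' ∧ b = b' := by
  have h := mul_right_cancel₀ varpi_ne h
  have him := congrArg Complex.im h
  have hre := congrArg Complex.re h
  simp at him hre
  have ht := tau_im_pos.ne'
  have : b = b' := by rcases him with h | h; exacts [h, absurd h ht]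
  subst this
  exact ⟨by simpa using hre, rfl⟩

lemma real_notMem {a b : ℝ} (h : ((a : ℂ) + b * τ) * ϖ₀ ∈ LL.lattice) :
    (∃ m : ℤ, a = m) ∧ (∃ n : ℤ, b = n) := by
  obtain ⟨m, n, h⟩ := mem_LL.1 h
  have := coef_eq (a := m) (b := n) (a' := a) (b' := b) (by push_cast; exact h)
  exact ⟨⟨m, this.1.symm⟩, ⟨n, this.2.symm⟩⟩

lemma wp_eq : wp = LL.weierstrassP := by
  funext z
  rw [← LL.weierstrassPExcept_add 0 z]
  simp only [wp, PeriodPair.weierstrassPExcept]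
  rw [← LL.latticeEquivProd.symm.toEquiv.tsum_eq]
  have hc : ∀ p : ℤ × ℤ, ((LL.latticeEquivProd.symm.toEquiv p : LL.lattice) : ℂ) = hexPt ϖ₀ p := by
    intro p
    have := LL.latticeEquiv_symm_apply p
    simp only [LinearEquiv.coe_toEquiv]
    rw [this, LL1, LL2, hexPt]; ring
  have h0 : ∀ p : ℤ × ℤ, hexPt ϖ₀ p = 0 ↔ p = 0 := by
    intro p
    rw [← hc]
    simp
  simp only [hc, Submodule.coe_zero, h0]
  have hs := tsum_subtype {p : ℤ × ℤ | p ≠ 0}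
    (fun p : ℤ × ℤ => (1 / (z - hexPt ϖ₀ p) ^ 2 - 1 / (hexPt ϖ₀ p) ^ 2))
  erw [hs]
  rw [add_comm]
  congr 1
  · congr 1
    funext p
    by_cases hp : p = 0 <;> simp [hp]
  · simp

/-- multiplication by `τ` on the lattice -/
def tauEquiv : LL.lattice ≃ LL.lattice where
  toFun l := ⟨τ * l, by
    obtain ⟨m, n, h⟩ := mem_LL.1 l.2
    refine mem_LL.2 ⟨-n, m + n, ?_⟩
    rw [← h]; push_cast; linear_combination (-(n : ℂ) * ϖ₀) * tau_sq⟩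
  invFun l := ⟨τ⁻¹ * l, by
    obtain ⟨m, n, h⟩ := mem_LL.1 l.2
    refine mem_LL.2 ⟨m + n, -m, ?_⟩
    rw [← h, eq_inv_mul_iff_mul_eq₀ tau_ne]; push_cast
    linear_combination (-(m : ℂ) * ϖ₀) * tau_sq⟩
  left_inv l := by ext; simp [tau_ne]
  right_inv l := by ext; simp [tau_ne]

/-- conjugation on the lattice -/
def conjEquiv : LL.lattice ≃ LL.lattice where
  toFun l := ⟨(starRingEnd ℂ) l, by
    obtain ⟨m, n, h⟩ := mem_LL.1 l.2
    refine mem_LL.2 ⟨m + n, -n, ?_⟩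
    rw [← h]; simp only [map_mul, map_add, map_intCast, conj_tau, Complex.conj_ofReal]; push_cast; ring⟩
  invFun l := ⟨(starRingEnd ℂ) l, by
    obtain ⟨m, n, h⟩ := mem_LL.1 l.2
    refine mem_LL.2 ⟨m + n, -n, ?_⟩
    rw [← h]; simp only [map_mul, map_add, map_intCast, conj_tau, Complex.conj_ofReal]; push_cast; ring⟩
  left_inv l := by ext; simp
  right_inv l := by ext; simp

lemma tau_mem {z : ℂ} : τ * z ∈ LL.lattice ↔ z ∈ LL.lattice := by
  constructor
  · intro h
    have := (tauEquiv.symm ⟨_, h⟩).2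
    simpa [tauEquiv, tau_ne] using this
  · intro h
    exact (tauEquiv ⟨_, h⟩).2

lemma P_tau (z : ℂ) : LL.weierstrassP (τ * z) = (τ ^ 2)⁻¹ * LL.weierstrassP z := by
  simp only [PeriodPair.weierstrassP]
  rw [← tauEquiv.tsum_eq, ← tsum_mul_left]
  congr 1; funext l
  simp only [tauEquiv, Equiv.coe_fn_mk]
  rw [← mul_sub, mul_pow, mul_pow]
  simp only [one_div, mul_inv]; ring

lemma P'_tau (z : ℂ) : LL.derivWeierstrassP (τ * z) = - LL.derivWeierstrassP z := by
  simp only [PeriodPair.derivWeierstrassP]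
  rw [← tauEquiv.tsum_eq]
  congr 1
  rw [← tsum_neg]
  congr 1; funext l
  simp only [tauEquiv, Equiv.coe_fn_mk]
  rw [← mul_sub, mul_pow, tau_cube]
  rw [neg_one_mul, div_neg]

lemma P_conj (z : ℂ) : LL.weierstrassP ((starRingEnd ℂ) z) = (starRingEnd ℂ) (LL.weierstrassP z) := by
  simp only [PeriodPair.weierstrassP]
  rw [← conjEquiv.tsum_eq, Complex.conj_tsum]
  congr 1; funext l
  simp [conjEquiv]

lemma P'_conj (z : ℂ) :
    LL.derivWeierstrassP ((starRingEnd ℂ) z) = (starRingEnd ℂ) (LL.derivWeierstrassP z) := by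
  simp only [PeriodPair.derivWeierstrassP]
  rw [← conjEquiv.tsum_eq, map_neg, Complex.conj_tsum]
  congr 2; funext l
  have h2 : (starRingEnd ℂ) 2 = 2 := Complex.conj_ofNat 2
  simp [conjEquiv, h2]

lemma g2_zero : LL.g₂ = 0 := by
  have : LL.G 4 = (τ ^ 4)⁻¹ * LL.G 4 := by
    conv_lhs => rw [PeriodPair.G, ← tauEquiv.tsum_eq]
    rw [PeriodPair.G, ← tsum_mul_left]
    congr 1; funext l
    simp only [tauEquiv, Equiv.coe_fn_mk]
    rw [mul_pow, mul_inv]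
  have h4 : τ ^ 4 = -τ := by linear_combination τ * tau_cube
  rw [h4] at this
  have h5 : (τ + 1) * LL.G 4 = 0 := by
    have h := tau_ne
    field_simp at this
    linear_combination this
  have h6 : τ + 1 ≠ 0 := by
    intro h
    have := congrArg Complex.re h
    simp [tau_re] at this
    norm_num at this
  rcases mul_eq_zero.1 h5 with h | h
  · exact absurd h h6
  · simp [PeriodPair.g₂, h]

lemma ode1 {z : ℂ} (hz : z ∉ LL.lattice) :
    LL.derivWeierstrassP z ^ 2 = 4 * LL.weierstrassP z ^ 3 - LL.g₃ := by
  rw [LL.derivWeierstrassP_sq z hz, g2_zero]; ring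

lemma countable_LL : (LL.lattice : Set ℂ).Countable := by
  have : (hexLattice ϖ₀).Countable := Set.countable_range _
  refine this.mono fun x hx => mem_hex.2 hx

lemma preconn_compl {s : Set ℂ} (hs : s.Countable) : IsPreconnected sᶜ :=
  (hs.isConnected_compl_of_one_lt_rank (by simp)).isPreconnected

lemma hasDeriv_P {z : ℂ} (hz : z ∉ LL.lattice) :
    HasDerivAt LL.weierstrassP (LL.derivWeierstrassP z) z := by
  rw [← LL.deriv_weierstrassP]
  exact (LL.analyticOnNhd_weierstrassP z hz).differentiableAt.hasDerivAt

lemma compl_nhds {z : ℂ} (hz : z ∉ LL.lattice) : ∀ᶠ w in 𝓝 z, w ∉ LL.lattice :=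
  LL.isClosed_lattice.isOpen_compl.mem_nhds hz

lemma P'_not_zero : ¬ Set.EqOn LL.derivWeierstrassP 0 (LL.lattice : Set ℂ)ᶜ := by
  intro h
  have hconst : ∀ z ∈ (LL.lattice : Set ℂ)ᶜ, ∀ w ∈ (LL.lattice : Set ℂ)ᶜ,
      LL.weierstrassP z = LL.weierstrassP w := by
    intro z hz w hw
    exact LL.isClosed_lattice.isOpen_compl.is_const_of_deriv_eq_zero
      (preconn_compl countable_LL) LL.differentiableOn_weierstrassP
      (by rw [LL.deriv_weierstrassP]; exact h) hz hw
  have hev : LL.weierstrassP =ᶠ[𝓝[≠] 0] fun _ => LL.weierstrassP (LL.ω₁ / 2) := by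
    have h1 := LL.compl_lattice_sdiff_singleton_mem_nhds 0
    filter_upwards [nhdsWithin_le_nhds h1, self_mem_nhdsWithin] with x hx hx0
    refine hconst _ ?_ _ LL.ω₁_div_two_notMem_lattice
    intro hxl
    exact hx ⟨hxl, hx0⟩
  have h2 := meromorphicOrderAt_congr hev
  rw [LL.order_weierstrassP 0 (zero_mem _)] at h2
  have h3 : 0 ≤ meromorphicOrderAt (fun _ : ℂ => LL.weierstrassP (LL.ω₁ / 2)) 0 :=
    (analyticAt_const).meromorphicOrderAt_nonneg
  rw [← h2] at h3
  exact absurd h3 (by decide)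

lemma ode2 {z : ℂ} (hz : z ∉ LL.lattice) :
    deriv LL.derivWeierstrassP z = 6 * LL.weierstrassP z ^ 2 := by
  have hA : AnalyticOnNhd ℂ (fun z => 2 * LL.derivWeierstrassP z) (LL.lattice : Set ℂ)ᶜ :=
    fun z hz => analyticAt_const.mul (LL.analyticOnNhd_derivWeierstrassP z hz)
  have hB : AnalyticOnNhd ℂ (fun z => deriv LL.derivWeierstrassP z - 6 * LL.weierstrassP z ^ 2)
      (LL.lattice : Set ℂ)ᶜ :=
    fun z hz => (LL.analyticOnNhd_derivWeierstrassP z hz).deriv.sub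
      (analyticAt_const.mul ((LL.analyticOnNhd_weierstrassP z hz).pow 2))
  have hprod : ∀ z ∈ (LL.lattice : Set ℂ)ᶜ, (fun z => 2 * LL.derivWeierstrassP z) z *
      (fun z => deriv LL.derivWeierstrassP z - 6 * LL.weierstrassP z ^ 2) z = 0 := by
    intro z hz
    have h1 : (fun w => LL.derivWeierstrassP w ^ 2) =ᶠ[𝓝 z]
        fun w => 4 * LL.weierstrassP w ^ 3 - LL.g₃ := by
      filter_upwards [compl_nhds hz] with w hw using ode1 hw
    have h2 := h1.deriv_eq
    have h3 := ((LL.analyticOnNhd_derivWeierstrassP z hz).differentiableAt.hasDerivAt.pow 2).deriv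
    have h4 := ((((hasDeriv_P hz).pow 3).const_mul 4).sub_const LL.g₃).deriv
    have h5 := h3.symm.trans (h2.trans h4)
    simp only [Nat.cast_ofNat] at h5
    linear_combination h5
  rcases hA.eq_zero_or_eq_zero_of_mul_eq_zero hB hprod (preconn_compl countable_LL) with h | h
  · exfalso
    apply P'_not_zero
    intro z hz
    have := h z hz
    simpa using this
  · exact sub_eq_zero.1 (h z hz)

lemma hasDeriv_P' {z : ℂ} (hz : z ∉ LL.lattice) :
    HasDerivAt LL.derivWeierstrassP (6 * LL.weierstrassP z ^ 2) z := by
  rw [← ode2 hz]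
  exact (LL.analyticOnNhd_derivWeierstrassP z hz).differentiableAt.hasDerivAt

/-- Uniqueness for the second order equation with right side c f ^ 2. -/
lemma ode_unique {f g : ℂ → ℂ} {a c : ℂ} (hf : AnalyticAt ℂ f a) (hg : AnalyticAt ℂ g a)
    (hf2 : ∀ᶠ z in 𝓝 a, deriv (deriv f) z = c * f z ^ 2)
    (hg2 : ∀ᶠ z in 𝓝 a, deriv (deriv g) z = c * g z ^ 2)
    (h0 : f a = g a) (h1 : deriv f a = deriv g a) : f =ᶠ[𝓝 a] g := by
  set d : ℂ → ℂ := f - g with hd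
  have hda : AnalyticAt ℂ d a := hf.sub hg
  have hd0 : d a = 0 := by simp [hd, h0]
  have hdd : deriv d =ᶠ[𝓝 a] deriv f - deriv g := by
    filter_upwards [hf.eventually_analyticAt, hg.eventually_analyticAt] with z hz hz'
    exact deriv_sub hz.differentiableAt hz'.differentiableAt
  have hd1 : deriv d a = 0 := by rw [hdd.eq_of_nhds]; simp [h1]
  have hd2 : deriv (deriv d) =ᶠ[𝓝 a] (fun z => c * (f z + g z)) * d := by
    have h2 := hdd.deriv
    filter_upwards [h2, hf2, hg2, hf.eventually_analyticAt, hg.eventually_analyticAt]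
      with z h3 h4 h5 h6 h7
    rw [h3, deriv_sub h6.deriv.differentiableAt h7.deriv.differentiableAt, h4, h5]
    simp [hd]; ring
  have hh : AnalyticAt ℂ (fun z => c * (f z + g z)) a := analyticAt_const.mul (hf.add hg)
  have ho := analyticOrderAt_congr hd2
  rw [analyticOrderAt_mul hh hda] at ho
  have e1 := hda.analyticOrderAt_deriv_add_one
  have e2 := hda.deriv.analyticOrderAt_deriv_add_one
  simp only [hd0, hd1, sub_zero] at e1 e2
  have e1' : analyticOrderAt (deriv d) a + 1 = analyticOrderAt d a := by
    simpa using e1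
  have e2' : analyticOrderAt (deriv (deriv d)) a + 1 = analyticOrderAt (deriv d) a := by
    simpa using e2
  have htop : analyticOrderAt d a = ⊤ := by
    by_contra hne
    obtain ⟨n, hn⟩ := ENat.ne_top_iff_exists.1 hne
    rw [← e1', ← e2', ho] at hn
    have : analyticOrderAt (fun z => c * (f z + g z)) a + analyticOrderAt d a + 1 + 1
      ≥ analyticOrderAt d a + 2 := by
      rw [add_assoc, one_add_one_eq_two]
      gcongr
      exact le_add_self
    rw [← hn] at this
    have hn' : analyticOrderAt d a = n := by rw [← e1', ← e2', ho, hn]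
    rw [hn'] at this
    have h3 : n + 2 ≤ n := by exact_mod_cast this
    omega
  rw [analyticOrderAt_eq_top] at htop
  filter_upwards [htop] with z hz
  simpa [hd, sub_eq_zero] using hz

lemma period_of_eq {a b : ℂ} (ha : a ∉ LL.lattice) (hb : b ∉ LL.lattice)
    (h0 : LL.weierstrassP a = LL.weierstrassP b)
    (h1 : LL.derivWeierstrassP a = LL.derivWeierstrassP b) : b - a ∈ LL.lattice := by
  by_contra hba
  set t := b - a with ht
  have hbt : b = a + t := by rw [ht]; ring
  set Q : ℂ → ℂ := fun z => LL.weierstrassP (z + t) with hQ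
  have hQan : ∀ z, z + t ∉ LL.lattice → AnalyticAt ℂ Q z := by
    intro z hz
    have : AnalyticAt ℂ LL.weierstrassP ((fun z => z + t) z) := LL.analyticOnNhd_weierstrassP _ hz
    exact AnalyticAt.comp (f := fun z => z + t) this (by fun_prop)
  have hQd : ∀ z, deriv Q z = LL.derivWeierstrassP (z + t) := by
    intro z
    rw [hQ, deriv_comp_add_const, LL.deriv_weierstrassP]
  have hQdd : ∀ z, deriv (deriv Q) z = deriv LL.derivWeierstrassP (z + t) := by
    intro z
    have : deriv Q = fun z => LL.derivWeierstrassP (z + t) := funext hQd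
    rw [this, deriv_comp_add_const]
  have hloc : LL.weierstrassP =ᶠ[𝓝 a] Q := by
    refine ode_unique (c := 6) (LL.analyticOnNhd_weierstrassP a ha) (hQan a (hbt ▸ hb)) ?_ ?_ ?_ ?_
    · rw [LL.deriv_weierstrassP]
      filter_upwards [compl_nhds ha] with z hz using ode2 hz
    · have hc : Tendsto (fun z => z + t) (𝓝 a) (𝓝 b) := by
        rw [hbt]; exact Continuous.tendsto (by fun_prop) a
      filter_upwards [hc.eventually (compl_nhds hb)] with z hz
      rw [hQdd, ode2 hz]
    · rw [h0, hQ, hbt]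
    · rw [hQd, LL.deriv_weierstrassP, h1, hbt]
  have hcount : ((LL.lattice : Set ℂ) ∪ (fun z => z + t) ⁻¹' LL.lattice).Countable :=
    countable_LL.union (countable_LL.preimage (add_left_injective t))
  have heq := AnalyticOnNhd.eqOn_of_preconnected_of_eventuallyEq
    (f := LL.weierstrassP) (g := Q) (U := ((LL.lattice : Set ℂ) ∪ (fun z => z + t) ⁻¹' LL.lattice)ᶜ)
    (fun z hz => LL.analyticOnNhd_weierstrassP z (fun h => hz (Or.inl h)))
    (fun z hz => hQan z (fun h => hz (Or.inr h))) (preconn_compl hcount) (z₀ := a)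
    (by rintro (h | h); exacts [ha h, hb (hbt ▸ h)]) hloc
  have hev : LL.weierstrassP =ᶠ[𝓝[≠] 0] Q := by
    have h1 := LL.compl_lattice_sdiff_singleton_mem_nhds 0
    have hc : Tendsto (fun z => z + t) (𝓝 0) (𝓝 t) := by
      have : Continuous (fun z : ℂ => z + t) := by fun_prop
      simpa using this.tendsto 0
    filter_upwards [nhdsWithin_le_nhds h1, self_mem_nhdsWithin,
      nhdsWithin_le_nhds (hc.eventually (compl_nhds hba))] with x hx hx0 hx1
    refine heq ?_
    rintro (h | h)
    exacts [hx ⟨h, hx0⟩, hx1 h]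
  have h2 := meromorphicOrderAt_congr hev
  rw [LL.order_weierstrassP 0 (zero_mem _)] at h2
  have h3 := (hQan 0 (by simpa using hba)).meromorphicOrderAt_nonneg
  rw [← h2] at h3
  exact absurd h3 (by decide)

/-- The endomorphism `√-3`. -/
def bb : ℂ := 2 * τ - 1

lemma bb_sq : bb ^ 2 = -3 := by
  unfold bb; linear_combination 4 * tau_sq

lemma bb_ne : bb ≠ 0 := by
  intro h; have := bb_sq; rw [h] at this; norm_num at this

lemma bb_mem {z : ℂ} (hz : z ∈ LL.lattice) : bb * z ∈ LL.lattice := by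
  have h1 : τ * z ∈ LL.lattice := tau_mem.2 hz
  have : bb * z = τ * z + τ * z - z := by unfold bb; ring
  rw [this]
  exact sub_mem (add_mem h1 h1) hz

lemma P_add {z l : ℂ} (hl : l ∈ LL.lattice) : LL.weierstrassP (z + l) = LL.weierstrassP z :=
  LL.weierstrassP_add_coe z ⟨l, hl⟩

lemma P'_add {z l : ℂ} (hl : l ∈ LL.lattice) :
    LL.derivWeierstrassP (z + l) = LL.derivWeierstrassP z :=
  LL.derivWeierstrassP_add_coe z ⟨l, hl⟩

lemma half_notMem : (ϖ₀ : ℂ) / 2 ∉ LL.lattice := LL.ω₁_div_two_notMem_lattice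

lemma varpi_mem : (ϖ₀ : ℂ) ∈ LL.lattice := LL.ω₁_mem_lattice

lemma tau_varpi_mem : τ * (ϖ₀ : ℂ) ∈ LL.lattice := LL.ω₂_mem_lattice

lemma P'_half : LL.derivWeierstrassP ((ϖ₀ : ℂ) / 2) = 0 := by
  have h := P'_add (z := -((ϖ₀ : ℂ) / 2)) varpi_mem
  rw [LL.derivWeierstrassP_neg, show -((ϖ₀ : ℂ) / 2) + ϖ₀ = ϖ₀ / 2 by ring] at h
  linear_combination h / 2

lemma g3_eq : LL.g₃ = 4 * LL.weierstrassP ((ϖ₀ : ℂ) / 2) ^ 3 := by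
  have := ode1 half_notMem
  rw [P'_half] at this
  linear_combination this

/-- A point with the property below is not a zero of `℘`. -/
lemma P_zero_rot {z : ℂ} (hz : z ∉ LL.lattice) (h : LL.weierstrassP z = 0) :
    τ ^ 2 * z - z ∈ LL.lattice := by
  have h1 : τ ^ 2 * z = τ * (τ * z) := by ring
  refine period_of_eq hz ?_ ?_ ?_
  · rw [h1, tau_mem, tau_mem]; exact hz
  · rw [h1, P_tau, P_tau, h]; simp
  · rw [h1, P'_tau, P'_tau]; simp

lemma real_mem {x : ℝ} (h : (x : ℂ) ∈ LL.lattice) : ∃ m : ℤ, x = m * ϖ₀ := by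
  have hp := varpi_pos.ne'
  have h' : (((x / ϖ₀ : ℝ) : ℂ) + (0 : ℝ) * τ) * ϖ₀ ∈ LL.lattice := by
    convert h using 1
    push_cast
    have := varpi_ne
    field_simp
    ring
  obtain ⟨⟨m, hm⟩, -⟩ := real_notMem h'
  exact ⟨m, by rw [← hm]; field_simp⟩

lemma notMem_of_Ioo {x : ℝ} (hx : x ∈ Set.Ioo 0 ϖ₀) : (x : ℂ) ∉ LL.lattice := by
  intro h
  obtain ⟨m, hm⟩ := real_mem h
  have h1 := hx.1
  have h2 := hx.2
  rw [hm] at h1 h2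
  have hp := varpi_pos
  have h3 : (0 : ℝ) < m := by by_contra! h; nlinarith
  have h4 : (m : ℝ) < 1 := by by_contra! h; nlinarith
  have h5 : 0 < m := by exact_mod_cast h3
  have h6 : m < 1 := by exact_mod_cast h4
  omega

lemma P_real_ne {x : ℝ} (hx : x ∈ Set.Ioo 0 ϖ₀) : LL.weierstrassP x ≠ 0 := by
  intro h
  have h1 := P_zero_rot (notMem_of_Ioo hx) h
  have hp := varpi_pos
  have h2 : τ ^ 2 * x - x = (((-2 * (x / ϖ₀) : ℝ) : ℂ) + ((x / ϖ₀ : ℝ) : ℂ) * τ) * ϖ₀ := by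
    rw [tau_sq]
    push_cast
    have := varpi_ne
    field_simp
    ring
  rw [h2] at h1
  obtain ⟨-, n, hn⟩ := real_notMem h1
  apply notMem_of_Ioo hx
  refine mem_LL.2 ⟨n, 0, ?_⟩
  have : (n : ℂ) = ((x / ϖ₀ : ℝ) : ℂ) := by rw [hn]; simp
  rw [this]
  push_cast
  have := varpi_ne
  field_simp
  ring

lemma P'_real_ne {x : ℝ} (hx : x ∈ Set.Ioo 0 (ϖ₀ / 2)) : LL.derivWeierstrassP x ≠ 0 := by
  intro h
  have hp := varpi_pos
  have hx' : x ∈ Set.Ioo 0 ϖ₀ := ⟨hx.1, by linarith [hx.2]⟩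
  have hn := notMem_of_Ioo hx'
  have h1 := period_of_eq (a := -x) (b := x) (by simpa using hn) hn (by simp) (by simp [h])
  refine notMem_of_Ioo (x := 2 * x) ⟨by linarith [hx.1], by linarith [hx.2]⟩ ?_
  convert h1 using 1
  push_cast; ring

lemma half_mem : ϖ₀ / 2 ∈ Set.Ioo 0 ϖ₀ := by
  have := varpi_pos; constructor <;> linarith

lemma P_half_ne : LL.weierstrassP ((ϖ₀ : ℂ) / 2) ≠ 0 := by
  have := P_real_ne half_mem
  simpa using this

lemma cm_formula {z : ℂ} (hz : bb * z ∉ LL.lattice) :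
    3 * LL.weierstrassP (bb * z) * LL.weierstrassP z ^ 2 = LL.g₃ - LL.weierstrassP z ^ 3 := by
  set a : ℂ := (ϖ₀ : ℂ) / 2 with ha
  have haL : a ∉ LL.lattice := half_notMem
  have hba : bb * a = a + (τ * ϖ₀ - ϖ₀) := by rw [ha, bb]; ring
  have hl : τ * (ϖ₀ : ℂ) - ϖ₀ ∈ LL.lattice := sub_mem tau_varpi_mem varpi_mem
  have hbaL : bb * a ∉ LL.lattice := by
    rw [hba]; intro h; apply haL; simpa using sub_mem h hl
  have hPa : LL.weierstrassP a ≠ 0 := P_half_ne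
  set f : ℂ → ℂ := fun z => LL.weierstrassP (bb * z) with hf
  set g : ℂ → ℂ := fun z => -(LL.weierstrassP z - LL.g₃ * (LL.weierstrassP z ^ 2)⁻¹) / 3 with hg
  have hfan : ∀ z, bb * z ∉ LL.lattice → AnalyticAt ℂ f z := by
    intro z hz
    exact AnalyticAt.comp (f := fun z => bb * z) (LL.analyticOnNhd_weierstrassP _ hz) (by fun_prop)
  have hfd : ∀ z, deriv f z = bb * LL.derivWeierstrassP (bb * z) := by
    intro z
    rw [hf, deriv_comp_mul_left, LL.deriv_weierstrassP, smul_eq_mul]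
  have hfdd : ∀ z, bb * z ∉ LL.lattice → deriv (deriv f) z = -18 * f z ^ 2 := by
    intro z hz
    have : deriv f = fun z => bb * LL.derivWeierstrassP (bb * z) := funext hfd
    rw [this, deriv_const_mul_field, deriv_comp_mul_left, smul_eq_mul, ode2 hz]
    linear_combination 6 * LL.weierstrassP (bb * z) ^ 2 * bb_sq
  have hgd : ∀ z, z ∉ LL.lattice → LL.weierstrassP z ≠ 0 →
      HasDerivAt g (-(1 + 2 * LL.g₃ * (LL.weierstrassP z ^ 3)⁻¹) * LL.derivWeierstrassP z / 3) z := by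
    intro z hz hne
    have h1 := ((hasDeriv_P hz).sub ((((hasDeriv_P hz).pow 2).inv
      (pow_ne_zero 2 hne)).const_mul LL.g₃)).neg.div_const 3
    refine HasDerivAt.congr_deriv (f := g) h1 ?_
    simp only [Nat.cast_ofNat, Pi.pow_apply]
    field_simp
    ring
  have hev : ∀ᶠ z in 𝓝 a, z ∉ LL.lattice ∧ LL.weierstrassP z ≠ 0 := by
    filter_upwards [compl_nhds haL,
      (LL.analyticOnNhd_weierstrassP a haL).continuousAt.eventually_ne hPa] with z h1 h2
    exact ⟨h1, h2⟩
  have hgdd : ∀ᶠ z in 𝓝 a, deriv (deriv g) z = -18 * g z ^ 2 := by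
    filter_upwards [hev.eventually_nhds] with z hz
    have e1 : deriv g =ᶠ[𝓝 z] fun z => -(1 + 2 * LL.g₃ * (LL.weierstrassP z ^ 3)⁻¹) *
        LL.derivWeierstrassP z / 3 := by
      filter_upwards [hz] with w hw using (hgd w hw.1 hw.2).deriv
    rw [e1.deriv_eq]
    obtain ⟨hzL, hne⟩ := hz.self_of_nhds
    have h1 := (((((((hasDeriv_P hzL).pow 3).inv
      (pow_ne_zero 3 hne)).const_mul (2 * LL.g₃)).const_add 1).neg).mul (hasDeriv_P' hzL)).div_const 3
    refine h1.deriv.trans ?_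
    simp only [hg, Nat.cast_ofNat]
    have ho := ode1 hzL
    simp only [Pi.neg_apply, Pi.pow_apply, Pi.inv_apply]
    field_simp
    linear_combination (18 * LL.weierstrassP z ^ 2 * LL.g₃) * ho
  have hgan : AnalyticAt ℂ g a := by
    have h := LL.analyticOnNhd_weierstrassP a haL
    exact ((h.sub (analyticAt_const.mul ((h.pow 2).inv (pow_ne_zero 2 hPa)))).neg).div_const
  have hcb : Tendsto (fun z => bb * z) (𝓝 a) (𝓝 (bb * a)) := Continuous.tendsto (by fun_prop) a
  have hloc : f =ᶠ[𝓝 a] g := by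
    refine ode_unique (c := -18) (hfan a hbaL) hgan ?_ hgdd ?_ ?_
    · filter_upwards [hcb.eventually (compl_nhds hbaL)] with z hz using hfdd z hz
    · simp only [hf, hg]
      rw [hba, P_add hl, g3_eq, ← ha]
      field_simp
      ring
    · rw [hfd, (hgd a haL hPa).deriv, hba, P'_add hl, P'_half]; simp
  have hzero : (fun z => 3 * LL.weierstrassP (bb * z) * LL.weierstrassP z ^ 2) =ᶠ[𝓝 a]
      fun z => LL.g₃ - LL.weierstrassP z ^ 3 := by
    filter_upwards [hloc, hev] with z h1 h2
    have hne := h2.2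
    simp only [hf, hg] at h1
    rw [h1]
    field_simp
    ring
  have hcount : ((fun z => bb * z) ⁻¹' LL.lattice).Countable :=
    countable_LL.preimage (mul_right_injective₀ bb_ne)
  have hnot : ∀ z, bb * z ∉ LL.lattice → z ∉ LL.lattice := fun z h h' => h (bb_mem h')
  exact AnalyticOnNhd.eqOn_of_preconnected_of_eventuallyEq
    (U := ((fun z => bb * z) ⁻¹' LL.lattice)ᶜ)
    (fun z hz => (analyticAt_const.mul (hfan z hz)).mul
      ((LL.analyticOnNhd_weierstrassP z (hnot z hz)).pow 2))
    (fun z hz => analyticAt_const.sub ((LL.analyticOnNhd_weierstrassP z (hnot z hz)).pow 3))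
    (preconn_compl hcount) (z₀ := a) hbaL hzero hz

lemma tau_add_one_ne : τ + 1 ≠ 0 := by
  intro h
  have := congrArg Complex.re h
  simp [tau_re] at this
  norm_num at this

lemma P_third_cube : LL.weierstrassP ((ϖ₀ : ℂ) / 3) ^ 3 = LL.g₃ := by
  have hw : bb * ((ϖ₀ : ℂ) / 3) = (((-1/3 : ℝ) : ℂ) + ((2/3 : ℝ) : ℂ) * τ) * ϖ₀ := by
    rw [bb]; push_cast; ring
  have hwL : bb * ((ϖ₀ : ℂ) / 3) ∉ LL.lattice := by
    rw [hw]; intro h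
    obtain ⟨-, n, hn⟩ := real_notMem h
    have : (3 * n : ℝ) = 2 := by rw [← hn]; norm_num
    have h3 : 3 * n = 2 := by exact_mod_cast this
    omega
  have hP : LL.weierstrassP (bb * ((ϖ₀ : ℂ) / 3)) = 0 := by
    set w := bb * ((ϖ₀ : ℂ) / 3) with hwd
    have h1 : τ * (τ * w) = w + -(τ * ϖ₀) := by
      rw [hwd, bb]; linear_combination (2 * τ - 1) * (ϖ₀ / 3 : ℂ) * tau_sq + (2 * ϖ₀ / 3 : ℂ) * tau_sq
    have h2 := P_add (z := w) (neg_mem tau_varpi_mem)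
    rw [← h1, P_tau, P_tau] at h2
    have := tau_ne
    have h3 : LL.weierstrassP w = τ ^ 4 * LL.weierstrassP w := by
      field_simp at h2
      linear_combination h2
    have h4 : τ ^ 4 = -τ := by linear_combination τ * tau_cube
    rw [h4] at h3
    have h5 : (τ + 1) * LL.weierstrassP w = 0 := by linear_combination h3
    exact (mul_eq_zero.1 h5).resolve_left tau_add_one_ne
  have := cm_formula hwL
  rw [hP] at this
  linear_combination this

/-- real `℘` -/
def pr (x : ℝ) : ℝ := (LL.weierstrassP x).re
/-- real derivative of the Weierstrass function -/
def qr (x : ℝ) : ℝ := (LL.derivWeierstrassP x).re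

lemma P_ofReal (x : ℝ) : LL.weierstrassP x = (pr x : ℂ) := by
  have := P_conj (x : ℂ)
  rw [Complex.conj_ofReal] at this
  exact (Complex.conj_eq_iff_re.1 this.symm).symm

lemma P'_ofReal (x : ℝ) : LL.derivWeierstrassP x = (qr x : ℂ) := by
  have := P'_conj (x : ℂ)
  rw [Complex.conj_ofReal] at this
  exact (Complex.conj_eq_iff_re.1 this.symm).symm

lemma hasDeriv_pr {x : ℝ} (hx : x ∈ Set.Ioo 0 ϖ₀) : HasDerivAt pr (qr x) x :=
  (hasDeriv_P (notMem_of_Ioo hx)).real_of_complex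

lemma hasDeriv_qr {x : ℝ} (hx : x ∈ Set.Ioo 0 ϖ₀) : ContinuousAt qr x := by
  have := ((hasDeriv_P' (notMem_of_Ioo hx))).real_of_complex
  exact this.continuousAt

lemma pr_tendsto : Tendsto pr (𝓝[>] 0) atTop := by
  have h1 : ∀ x : ℝ, pr x = (LL.weierstrassPExcept 0 x).re + (x ^ 2)⁻¹ := by
    intro x
    have := LL.weierstrassPExcept_add 0 x
    rw [pr, ← this]
    have e : (1 / ((x : ℂ) - ((0 : LL.lattice) : ℂ)) ^ 2 - 1 / ((0 : LL.lattice) : ℂ) ^ 2) =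
      (((x ^ 2)⁻¹ : ℝ) : ℂ) := by simp
    rw [e, Complex.add_re, Complex.ofReal_re]
    simp
  have h2 : pr = fun x : ℝ => (LL.weierstrassPExcept 0 x).re + (x ^ 2)⁻¹ := funext h1
  rw [h2]
  have hc : ContinuousAt (fun x : ℝ => (LL.weierstrassPExcept 0 x).re) 0 := by
    have h3 : ContinuousAt (LL.weierstrassPExcept 0) ((0 : ℝ) : ℂ) := by
      simpa using (LL.analyticAt_weierstrassPExcept 0).continuousAt
    have h4 : ContinuousAt (fun x : ℝ => LL.weierstrassPExcept 0 (x : ℂ)) 0 :=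
      ContinuousAt.comp (f := fun x : ℝ => (x : ℂ)) h3 Complex.continuous_ofReal.continuousAt
    exact Complex.continuous_re.continuousAt.comp h4
  refine Tendsto.add_atTop (hc.tendsto.mono_left nhdsWithin_le_nhds) ?_
  have h5 : Tendsto (fun x : ℝ => x⁻¹ ^ 2) (𝓝[>] 0) atTop :=
    (tendsto_pow_atTop two_ne_zero).comp tendsto_inv_nhdsGT_zero
  simpa using h5

lemma sub_Ioo {x : ℝ} (hx : x ∈ Set.Ioc 0 (ϖ₀ / 2)) : x ∈ Set.Ioo 0 ϖ₀ :=
  ⟨hx.1, by linarith [hx.2, varpi_pos]⟩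

lemma exists_large (M b : ℝ) (hb : 0 < b) : ∃ x, 0 < x ∧ x < b ∧ M < pr x := by
  have h1 := pr_tendsto.eventually_gt_atTop M
  have h2 : ∀ᶠ x in 𝓝[>] (0 : ℝ), x ∈ Set.Ioo 0 b := Ioo_mem_nhdsGT hb
  obtain ⟨x, h3, h4⟩ := (h1.and h2).exists
  exact ⟨x, h4.1, h4.2, h3⟩

lemma qr_neg {x : ℝ} (hx : x ∈ Set.Ioo 0 (ϖ₀ / 2)) : qr x < 0 := by
  have hp := varpi_pos
  have hne : ∀ y ∈ Set.Ioo 0 (ϖ₀ / 2), qr y ≠ 0 := by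
    intro y hy h
    apply P'_real_ne hy
    rw [P'_ofReal, h]; simp
  have hc : ContinuousOn qr (Set.Ioo 0 (ϖ₀ / 2)) := fun y hy =>
    (hasDeriv_qr (sub_Ioo ⟨hy.1, hy.2.le⟩)).continuousWithinAt
  by_contra! hx0
  have hpos : ∀ y ∈ Set.Ioo 0 (ϖ₀ / 2), 0 < qr y := by
    intro y hy
    by_contra! hy0
    obtain ⟨z, hz, hz0⟩ := isPreconnected_Ioo.intermediate_value hy hx hc ⟨hy0, hx0⟩
    exact hne z hz hz0
  have hmono : StrictMonoOn pr (Set.Ioo 0 (ϖ₀ / 2)) := by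
    refine strictMonoOn_of_deriv_pos (convex_Ioo _ _) ?_ ?_
    · intro y hy
      exact (hasDeriv_pr (sub_Ioo ⟨hy.1, hy.2.le⟩)).continuousAt.continuousWithinAt
    · intro y hy
      rw [interior_Ioo] at hy
      rw [(hasDeriv_pr (sub_Ioo ⟨hy.1, hy.2.le⟩)).deriv]
      exact hpos y hy
  obtain ⟨y, hy1, hy2, hy3⟩ := exists_large (pr x) x hx.1
  have := hmono ⟨hy1, hy2.trans hx.2⟩ hx hy2
  linarith

lemma pr_cont : ContinuousOn pr (Set.Ioc 0 (ϖ₀ / 2)) := fun _ hy =>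
  (hasDeriv_pr (sub_Ioo hy)).continuousAt.continuousWithinAt

lemma pr_anti : StrictAntiOn pr (Set.Ioc 0 (ϖ₀ / 2)) := by
  refine strictAntiOn_of_deriv_neg (convex_Ioc _ _) pr_cont ?_
  intro y hy
  rw [interior_Ioc] at hy
  rw [(hasDeriv_pr (sub_Ioo ⟨hy.1, hy.2.le⟩)).deriv]
  exact qr_neg hy

lemma half_mem' : ϖ₀ / 2 ∈ Set.Ioc 0 (ϖ₀ / 2) := ⟨by linarith [varpi_pos], le_rfl⟩

lemma pr_half_pos : 0 < pr (ϖ₀ / 2) := by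
  by_contra! h
  obtain ⟨y, hy1, hy2, hy3⟩ := exists_large 0 (ϖ₀ / 2) half_mem'.1
  obtain ⟨z, hz, hz0⟩ := isPreconnected_Ioc.intermediate_value half_mem' ⟨hy1, hy2.le⟩ pr_cont
    ⟨h, hy3.le⟩
  apply P_real_ne (sub_Ioo hz)
  rw [P_ofReal, hz0]; simp

lemma qr_sq {x : ℝ} (hx : x ∈ Set.Ioo 0 ϖ₀) :
    qr x ^ 2 = 4 * (pr x ^ 3 - pr (ϖ₀ / 2) ^ 3) := by
  have h := ode1 (notMem_of_Ioo hx)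
  have h2 : ((ϖ₀ : ℂ) / 2) = ((ϖ₀ / 2 : ℝ) : ℂ) := by simp
  rw [g3_eq, h2, P_ofReal, P_ofReal, P'_ofReal] at h
  have h3 : qr x ^ 2 = 4 * pr x ^ 3 - 4 * pr (ϖ₀ / 2) ^ 3 := by exact_mod_cast h
  rw [h3]; ring

/-- substitution function -/
def Sr (x : ℝ) : ℝ := pr (ϖ₀ / 2) ^ 3 / pr x ^ 3

lemma pr_pos {x : ℝ} (hx : x ∈ Set.Ioc 0 (ϖ₀ / 2)) : 0 < pr x :=
  pr_half_pos.trans_le (pr_anti.antitoneOn hx half_mem' hx.2)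

lemma Sr_mono : StrictMonoOn Sr (Set.Ioc 0 (ϖ₀ / 2)) := by
  intro x hx y hy hxy
  have h1 := pr_anti hx hy hxy
  have h2 := pr_pos hy
  have h3 := pr_half_pos
  unfold Sr
  gcongr

lemma Sr_half : Sr (ϖ₀ / 2) = 1 := by
  have h3 := pr_half_pos
  unfold Sr; field_simp

lemma Sr_cont : ContinuousOn Sr (Set.Ioc 0 (ϖ₀ / 2)) := by
  unfold Sr
  refine continuousOn_const.div (pr_cont.pow 3) ?_
  intro x hx
  exact pow_ne_zero 3 (pr_pos hx).ne'

lemma Sr_image : Sr '' Set.Ioo 0 (ϖ₀ / 2) = Set.Ioo 0 1 := by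
  have h3 := pr_half_pos
  ext y
  constructor
  · rintro ⟨x, hx, rfl⟩
    have hx' : x ∈ Set.Ioc 0 (ϖ₀ / 2) := ⟨hx.1, hx.2.le⟩
    have h1 := pr_pos hx'
    refine ⟨by unfold Sr; positivity, ?_⟩
    rw [← Sr_half]
    exact Sr_mono hx' half_mem' hx.2
  · rintro ⟨hy0, hy1⟩
    obtain ⟨x, hx1, hx2, hx3⟩ := exists_large (max 1 (pr (ϖ₀ / 2) ^ 3 / y)) (ϖ₀ / 2) half_mem'.1
    have hx4 : 1 < pr x := lt_of_le_of_lt (le_max_left _ _) hx3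
    have hx5 : pr (ϖ₀ / 2) ^ 3 / y < pr x := lt_of_le_of_lt (le_max_right _ _) hx3
    have hSx : Sr x < y := by
      unfold Sr
      rw [div_lt_iff₀ (by positivity)]
      rw [div_lt_iff₀ hy0] at hx5
      have : pr x ≤ pr x ^ 3 := le_self_pow₀ hx4.le (by norm_num)
      nlinarith
    have hsub : Set.Icc x (ϖ₀ / 2) ⊆ Set.Ioc 0 (ϖ₀ / 2) := fun z hz => ⟨hx1.trans_le hz.1, hz.2⟩
    obtain ⟨z, hz, hz0⟩ := intermediate_value_Ioo hx2.le (Sr_cont.mono hsub)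
      (show y ∈ Set.Ioo (Sr x) (Sr (ϖ₀ / 2)) from ⟨hSx, by rw [Sr_half]; exact hy1⟩)
    exact ⟨z, ⟨hx1.trans hz.1, hz.2⟩, hz0⟩

lemma Sr_deriv {x : ℝ} (hx : x ∈ Set.Ioo 0 (ϖ₀ / 2)) :
    HasDerivAt Sr (-(3 * pr (ϖ₀ / 2) ^ 3 * qr x / pr x ^ 4)) x := by
  have hx' : x ∈ Set.Ioc 0 (ϖ₀ / 2) := ⟨hx.1, hx.2.le⟩
  have hne := (pr_pos hx').ne'
  have h1 := ((hasDeriv_pr (sub_Ioo hx')).pow 3).inv (pow_ne_zero 3 hne)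
  have h2 := h1.const_mul (pr (ϖ₀ / 2) ^ 3)
  have hS : Sr = fun y => pr (ϖ₀ / 2) ^ 3 * (pr ^ 3)⁻¹ y := by
    funext y
    simp only [Sr, Pi.inv_apply, Pi.pow_apply, div_eq_mul_inv]
  rw [hS]
  refine h2.congr_deriv ?_
  simp only [Nat.cast_ofNat, Pi.pow_apply]
  field_simp
  norm_num
  try ring

lemma integrand_eq {x : ℝ} (hx : x ∈ Set.Ioo 0 (ϖ₀ / 2)) :
    (-(3 * pr (ϖ₀ / 2) ^ 3 * qr x / pr x ^ 4)) *
      (Sr x ^ ((1/6 : ℝ) - 1) * (1 - Sr x) ^ ((1/2 : ℝ) - 1)) = 6 * √(pr (ϖ₀ / 2)) := by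
  have hx' : x ∈ Set.Ioc 0 (ϖ₀ / 2) := ⟨hx.1, hx.2.le⟩
  have hp := pr_pos hx'
  have he := pr_half_pos
  have hq := qr_neg hx
  have hsq := qr_sq (sub_Ioo hx')
  set e := pr (ϖ₀ / 2) with hedef
  set p := pr x with hpdef
  set q := qr x with hqdef
  set a := √p with ha
  set b := √e with hb
  have ha0 : 0 < a := Real.sqrt_pos.2 hp
  have hb0 : 0 < b := Real.sqrt_pos.2 he
  have hpa : p = a ^ 2 := (Real.sq_sqrt hp.le).symm
  have heb : e = b ^ 2 := (Real.sq_sqrt he.le).symm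
  have hS : Sr x = (b / a) ^ 6 := by
    unfold Sr
    rw [← hpdef, ← hedef, hpa, heb]; ring
  have hS1 : 1 - Sr x = (-q / (2 * a ^ 3)) ^ 2 := by
    rw [hS, div_pow (-q), neg_sq, hsq, hpa, heb]
    field_simp
    norm_num
  have hba : 0 < b / a := by positivity
  have hqa : 0 < -q / (2 * a ^ 3) := div_pos (by linarith) (by positivity)
  have e1 : Sr x ^ ((1/6 : ℝ) - 1) = ((b / a) ^ 5)⁻¹ := by
    rw [hS, ← Real.rpow_natCast, ← Real.rpow_mul hba.le, ← Real.rpow_natCast, ← Real.rpow_neg hba.le]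
    norm_num
  have e2 : (1 - Sr x) ^ ((1/2 : ℝ) - 1) = (-q / (2 * a ^ 3))⁻¹ := by
    rw [hS1, ← Real.rpow_natCast, ← Real.rpow_mul hqa.le, ← Real.rpow_neg_one]
    norm_num
  rw [e1, e2, hpa, heb]
  have hq0 := hq.ne
  field_simp
  norm_num

open MeasureTheory in
lemma beta_val : ∫ s in Set.Ioo (0:ℝ) 1, s ^ ((1/6 : ℝ) - 1) * (1 - s) ^ ((1/2 : ℝ) - 1) =
    3 * ϖ₀ * √(pr (ϖ₀ / 2)) := by
  have hpos := varpi_pos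
  rw [← Sr_image, integral_image_eq_integral_deriv_smul_of_monotoneOn measurableSet_Ioo
    (fun x hx => (Sr_deriv hx).hasDerivWithinAt)
    (Sr_mono.monotoneOn.mono Set.Ioo_subset_Ioc_self)]
  rw [setIntegral_congr_fun (g := fun _ => 6 * √(pr (ϖ₀ / 2))) measurableSet_Ioo
    (fun x hx => by simpa only [smul_eq_mul] using integrand_eq hx)]
  rw [setIntegral_const, Real.volume_real_Ioo_of_le (by linarith), smul_eq_mul]
  ring

open MeasureTheory in
lemma beta_val2 : ∫ s in Set.Ioo (0:ℝ) 1, s ^ ((1/6 : ℝ) - 1) * (1 - s) ^ ((1/2 : ℝ) - 1) =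
    Real.Gamma (1/6) * Real.Gamma (1/2) / Real.Gamma (2/3) := by
  have h := ProbabilityTheory.beta_eq_betaIntegralReal (1/6) (1/2) (by norm_num) (by norm_num)
  rw [ProbabilityTheory.beta, show (1/6 + 1/2 : ℝ) = 2/3 by norm_num] at h
  rw [h, Complex.betaIntegral, intervalIntegral.integral_of_le zero_le_one,
    ← integral_Ioc_eq_integral_Ioo]
  have : ∫ x in Set.Ioc (0:ℝ) 1, (x : ℂ) ^ (((1/6 : ℝ) : ℂ) - 1) * (1 - (x : ℂ)) ^ (((1/2 : ℝ) : ℂ) - 1)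
      = ∫ x in Set.Ioc (0:ℝ) 1, ((x ^ ((1/6 : ℝ) - 1) * (1 - x) ^ ((1/2 : ℝ) - 1) : ℝ) : ℂ) := by
    refine setIntegral_congr_fun measurableSet_Ioc ?_
    intro x hx
    have h1 : 0 ≤ 1 - x := by linarith [hx.2]
    simp only
    rw [Complex.ofReal_mul, Complex.ofReal_cpow hx.1.le, Complex.ofReal_cpow h1]
    push_cast
    rfl
  rw [this, integral_complex_ofReal, Complex.ofReal_re]

lemma e_cube : pr (ϖ₀ / 2) ^ 3 = 1 / 4 := by
  have h := beta_val.symm.trans beta_val2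
  have he := pr_half_pos
  set e := pr (ϖ₀ / 2)
  have hd := Real.Gamma_mul_Gamma_add_half (1/6)
  rw [show (1/6 + 1/2 : ℝ) = 2/3 by norm_num, show (2 * (1/6) : ℝ) = 1/3 by norm_num,
    show (1 - 1/3 : ℝ) = 2/3 by norm_num] at hd
  have hr := Real.Gamma_mul_Gamma_one_sub (1/3)
  rw [show (1 - 1/3 : ℝ) = 2/3 by norm_num, mul_one_div, Real.sin_pi_div_three] at hr
  rw [Real.Gamma_one_half_eq] at h
  unfold ϖ₀ at h
  have g1 := Real.Gamma_pos_of_pos (show (0:ℝ) < 1/3 by norm_num)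
  have g2 := Real.Gamma_pos_of_pos (show (0:ℝ) < 2/3 by norm_num)
  have g3 := Real.Gamma_pos_of_pos (show (0:ℝ) < 1/6 by norm_num)
  generalize Real.Gamma (1/3) = A at *
  generalize Real.Gamma (2/3) = B at *
  generalize Real.Gamma (1/6) = C at *
  have hc3 : ((2:ℝ) ^ (2/3 : ℝ)) ^ 3 = 4 := by
    rw [← Real.rpow_natCast, ← Real.rpow_mul (by norm_num)]; norm_num
  have hc0 : 0 < (2:ℝ) ^ (2/3 : ℝ) := by positivity
  generalize (2:ℝ) ^ (2/3 : ℝ) = c at *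
  have hpi := Real.pi_pos
  have hs := Real.sq_sqrt hpi.le
  have hs0 := Real.sqrt_pos.2 hpi
  have h3 := Real.sq_sqrt (show (0:ℝ) ≤ 3 by norm_num)
  have h30 := Real.sqrt_pos.2 (show (0:ℝ) < 3 by norm_num)
  generalize Real.pi = P at *
  generalize √P = t at *
  generalize √3 = u at *
  have hb := Real.sq_sqrt he.le
  have hb0 := Real.sqrt_pos.2 he
  generalize √e = b at *
  -- A B u = 2 P, C B = A c t, 3 A^3 b B = 2 P C t
  have k1 : A * B * u = 2 * P := by rw [hr]; field_simp
  have k2 : 3 * A ^ 3 * b * B = 2 * P * C * t := by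
    field_simp at h; linear_combination h
  have k3 : A ^ 2 * B ^ 2 * 3 = 4 * P ^ 2 := by
    rw [← h3]; linear_combination (A * B * u + 2 * P) * k1
  have k4 : (4 * P ^ 2 * A) * b = (4 * P ^ 2 * A) * (c / 2) := by
    have : (3 * A ^ 3 * b * B) * B = 2 * P * t * (C * B) := by rw [k2]; ring
    rw [hd] at this
    linear_combination this - A * b * k3 + 2 * P * A * c * hs
  have k5 : b = c / 2 := mul_left_cancel₀ (by positivity) k4
  rw [← hb, k5]
  linear_combination (1/64) * (c ^ 3 + 4) * hc3

lemma g3_one : LL.g₃ = 1 := by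
  have h2 : ((ϖ₀ : ℂ) / 2) = ((ϖ₀ / 2 : ℝ) : ℂ) := by simp
  rw [g3_eq, h2, P_ofReal, ← Complex.ofReal_pow, e_cube]
  push_cast; norm_num

lemma P_third : LL.weierstrassP ((ϖ₀ : ℂ) / 3) = 1 ∧
    LL.derivWeierstrassP ((ϖ₀ : ℂ) / 3) = -(√3 : ℝ) := by
  have hp := varpi_pos
  have h2 : ((ϖ₀ : ℂ) / 3) = ((ϖ₀ / 3 : ℝ) : ℂ) := by simp
  have hm : ϖ₀ / 3 ∈ Set.Ioo 0 (ϖ₀ / 2) := ⟨by linarith, by linarith⟩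
  have h := P_third_cube
  rw [g3_one, h2, P_ofReal] at h
  have h3 : pr (ϖ₀ / 3) ^ 3 = 1 := by exact_mod_cast h
  have h4 := pr_pos ⟨hm.1, hm.2.le⟩
  have h5 : pr (ϖ₀ / 3) = 1 := (pow_eq_one_iff_of_nonneg h4.le (by norm_num)).1 h3
  have h6 := qr_sq (sub_Ioo ⟨hm.1, hm.2.le⟩)
  rw [h3, e_cube] at h6
  have h7 := qr_neg hm
  have h8 : -qr (ϖ₀ / 3) = √3 := by
    rw [eq_comm, Real.sqrt_eq_iff_mul_self_eq (by norm_num) (by linarith)]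
    nlinarith
  rw [h2, P_ofReal, P'_ofReal, h5, ← h8]
  simp

lemma exp_two : Complex.exp (2 * Real.pi * Complex.I / 3) = τ ^ 2 := by
  rw [τ, ← Complex.exp_nat_mul]; congr 1; push_cast; ring

lemma third_notMem : (ϖ₀ : ℂ) / 3 ∉ LL.lattice := by
  have hp := varpi_pos
  have h2 : ((ϖ₀ : ℂ) / 3) = ((ϖ₀ / 3 : ℝ) : ℂ) := by simp
  rw [h2]
  exact notMem_of_Ioo ⟨by linarith, by linarith⟩

lemma cube_of_zero {z : ℂ} (hz : z ∉ LL.lattice)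
    (h : LL.derivWeierstrassP z = -(√3 : ℝ)) : LL.weierstrassP z ^ 3 = 1 := by
  have h1 := ode1 hz
  rw [h, g3_one] at h1
  have h3 : ((√3 : ℝ) : ℂ) ^ 2 = 3 := by
    rw [← Complex.ofReal_pow, Real.sq_sqrt (by norm_num)]; norm_num
  linear_combination (-1/4 : ℂ) * h1 + (1/4 : ℂ) * h3

lemma P_tau2 (w : ℂ) : LL.weierstrassP (τ ^ 2 * w) = τ ^ 2 * LL.weierstrassP w := by
  rw [show τ ^ 2 * w = τ * (τ * w) by ring, P_tau, P_tau]
  have := tau_ne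
  field_simp
  linear_combination (-LL.weierstrassP w) * (τ ^ 3 - 1) * tau_cube

lemma P'_tau2 (w : ℂ) : LL.derivWeierstrassP (τ ^ 2 * w) = LL.derivWeierstrassP w := by
  rw [show τ ^ 2 * w = τ * (τ * w) by ring, P'_tau, P'_tau, neg_neg]

lemma tau2_notMem {w : ℂ} (hw : w ∉ LL.lattice) : τ ^ 2 * w ∉ LL.lattice := by
  rw [show τ ^ 2 * w = τ * (τ * w) by ring, tau_mem, tau_mem]; exact hw

/-- the zeros of `℘'(z) + √3` are exactly
`ϖ/3 + ω`, `e^{πi/3}·(2ϖ/3) + ω`, `e^{2πi/3}·(ϖ/3) + ω`, `ω ∈ 𝕋`, all simple. -/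
theorem wp'_plus_sqrt3_zeros :
    (∀ z : ℂ, z ∉ hexLattice ϖ₀ →
      (deriv wp z + (Real.sqrt 3 : ℂ) = 0 ↔ ∃ ω ∈ hexLattice ϖ₀,
        z = (ϖ₀ : ℂ) / 3 + ω ∨
        z = τ * (2 * (ϖ₀ : ℂ) / 3) + ω ∨
        z = Complex.exp (2 * Real.pi * Complex.I / 3) * ((ϖ₀ : ℂ) / 3) + ω)) ∧
    (∀ z : ℂ, z ∉ hexLattice ϖ₀ → deriv wp z + (Real.sqrt 3 : ℂ) = 0 →
      deriv (deriv wp) z ≠ 0) := by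
  have hd : deriv wp = LL.derivWeierstrassP := by rw [wp_eq, LL.deriv_weierstrassP]
  have hv : ∀ z, deriv wp z + (Real.sqrt 3 : ℂ) = 0 ↔ LL.derivWeierstrassP z = -(√3 : ℝ) := by
    intro z; rw [hd, ← eq_neg_iff_add_eq_zero]
  obtain ⟨hP, hP'⟩ := P_third
  have hn1 := third_notMem
  have hn2 := tau2_notMem hn1
  have hn3 := tau2_notMem hn2
  refine ⟨fun z hz => ?_, fun z hz h => ?_⟩
  · rw [mem_hex] at hz
    rw [hv, exp_two]
    constructor
    · intro h
      have hc := cube_of_zero hz h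
      have hf : (LL.weierstrassP z - 1) * ((LL.weierstrassP z - τ ^ 2) *
          (LL.weierstrassP z - τ ^ 2 * τ ^ 2)) = 0 := by
        have h4 : τ ^ 2 * τ ^ 2 = -τ := by linear_combination τ * tau_cube
        rw [h4, tau_sq]
        linear_combination hc - (LL.weierstrassP z - 1) * tau_sq
      rcases mul_eq_zero.1 hf with h1 | h1
      · refine ⟨z - (ϖ₀ : ℂ) / 3, ?_, Or.inl (by ring)⟩
        rw [mem_hex]
        exact period_of_eq hn1 hz (by rw [hP]; linear_combination -h1) (by rw [hP', h])
      rcases mul_eq_zero.1 h1 with h2 | h2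
      · refine ⟨z - τ ^ 2 * ((ϖ₀ : ℂ) / 3), ?_, Or.inr (Or.inr (by ring))⟩
        rw [mem_hex]
        exact period_of_eq hn2 hz (by rw [P_tau2, hP]; linear_combination -h2)
          (by rw [P'_tau2, hP', h])
      · refine ⟨z - τ ^ 2 * (τ ^ 2 * ((ϖ₀ : ℂ) / 3)) - τ * ϖ₀, ?_, Or.inr (Or.inl ?_)⟩
        · rw [mem_hex]
          exact sub_mem (period_of_eq hn3 hz (by rw [P_tau2, P_tau2, hP]; linear_combination -h2)
            (by rw [P'_tau2, P'_tau2, hP', h])) tau_varpi_mem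
        · linear_combination (ϖ₀ / 3 : ℂ) * τ * tau_cube
    · rintro ⟨ω, hω, h | h | h⟩ <;> rw [mem_hex] at hω <;> rw [h, P'_add hω]
      · exact hP'
      · have : τ * (2 * (ϖ₀ : ℂ) / 3) = τ ^ 2 * (τ ^ 2 * ((ϖ₀ : ℂ) / 3)) + τ * ϖ₀ := by
          linear_combination -(ϖ₀ / 3 : ℂ) * τ * tau_cube
        rw [this, P'_add tau_varpi_mem, P'_tau2, P'_tau2, hP']
      · rw [P'_tau2, hP']
  · rw [mem_hex] at hz
    rw [hv] at h
    have hc := cube_of_zero hz h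
    rw [hd, ode2 hz]
    intro h0
    have h1 : LL.weierstrassP z ^ 2 = 0 := by linear_combination h0 / 6
    have h2 : LL.weierstrassP z = 0 := pow_eq_zero_iff (two_ne_zero) |>.1 h1
    rw [h2] at hc
    norm_num at hc
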